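/- Let α > -1/2, t ∈ ℝ, let τ ∈ ℝ[X] have no zeros on [-1,1], and let π_i, π_m ∈ ℝ[X]. Define W^{(α)}_τ(z) = (1-z²)^{α-1/2}/τ(z)², ρ_{ab}(z) = ∫_{-1}^{z} π_a(u)·π_b(u)·W^{(α)}_τ(u) du, ν_i = ρ_{ii}(1), ν_m = ρ_{mm}(1), τ_m = τ·(1 + t·ρ_{mm}), π_{m;i} = (1 + t·ρ_{mm})·π_i - t·ρ_{im}·π_m, and W^{(α)}_{τ_m}(z) = (1-z²)^{α-1/2}/τ_m(z)². Assume 1 + t·ν_m > 0. If i ≠ m and ∫_{-1}^{1} π_i·π_m·W^{(α)}_τ = 0, then ∫_{-1}^{1} π_{m;i}(z)²·W^{(α)}_{τ_m}(z) dz = ν_i. Moreover, for i = m, ∫_{-1}^{1} π_{m;m}(z)²·W^{(α)}_{τ_m}(z) dz = ν_m/(1 + t·ν_m). In particular, the reciprocal norms satisfy ν_{m;i}⁻¹ = ν_i⁻¹ + δ_{im}·t. -/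

import Mathlib

/-- The weight `W^{(α)}_τ(z) = (1-z²)^{α-1/2}/τ(z)²`. -/
noncomputable def gegenWeight (α : ℝ) (τ : Polynomial ℝ) (z : ℝ) : ℝ :=
  (1 - z ^ 2) ^ (α - 1/2 : ℝ) / (τ.eval z) ^ 2

/-- `ρ_{ab}(z) = ∫_{-1}^z π_a π_b W^{(α)}_τ`. -/
noncomputable def rhoInt (α : ℝ) (τ pa pb : Polynomial ℝ) (z : ℝ) : ℝ :=
  ∫ u in (-1 : ℝ)..z, pa.eval u * pb.eval u * gegenWeight α τ u

/-- The transformed τ-function `τ_m = τ(1 + tρ_{mm})`. -/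
noncomputable def tauCDT (α : ℝ) (τ πm : Polynomial ℝ) (t : ℝ) (z : ℝ) : ℝ :=
  τ.eval z * (1 + t * rhoInt α τ πm πm z)

/-- The transformed eigenfunction `π_{m;i} = (1 + tρ_{mm})π_i - tρ_{im}π_m`. -/
noncomputable def piCDT (α : ℝ) (τ πm πi : Polynomial ℝ) (t : ℝ) (z : ℝ) : ℝ :=
  (1 + t * rhoInt α τ πm πm z) * πi.eval z - t * rhoInt α τ πi πm z * πm.eval z

/-- The transformed weight `W^{(α)}_{τ_m}(z) = (1-z²)^{α-1/2}/τ_m(z)²`. -/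
noncomputable def gegenWeightCDT (α : ℝ) (τ πm : Polynomial ℝ) (t : ℝ) (z : ℝ) : ℝ :=
  (1 - z ^ 2) ^ (α - 1/2 : ℝ) / (tauCDT α τ πm t z) ^ 2

open MeasureTheory Set intervalIntegral

lemma intervalIntegrable_one_sub_sq_rpow {s : ℝ} (hs : -1 < s) :
    IntervalIntegrable (fun z : ℝ => (1 - z ^ 2) ^ s) volume (-1) 1 := by
  have right : IntervalIntegrable (fun z : ℝ => (1 - z ^ 2) ^ s) volume 0 1 := by
    have h : IntervalIntegrable (fun z : ℝ => (1 - z) ^ s) volume 0 1 := by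
      simpa using ((intervalIntegrable_rpow' hs (a := 0) (b := 1)).comp_sub_left 1).symm
    have hc : ContinuousOn (fun z : ℝ => (1 + z) ^ s) (uIcc 0 1) := by
      refine ContinuousOn.rpow_const (by fun_prop) fun z hz => Or.inl ?_
      rw [uIcc_of_le zero_le_one] at hz
      linarith [hz.1]
    refine (h.mul_continuousOn hc).congr fun z hz => ?_
    rw [uIoc_of_le zero_le_one] at hz
    change (1 - z) ^ s * (1 + z) ^ s = (1 - z ^ 2) ^ s
    rw [← Real.mul_rpow (by linarith [hz.2]) (by linarith [hz.1])]
    congr 1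
    ring
  have left : IntervalIntegrable (fun z : ℝ => (1 - z ^ 2) ^ s) volume (-1) 0 := by
    simpa using (right.comp_sub_left 0).symm
  exact left.trans right

section

variable {α : ℝ} {τ : Polynomial ℝ}

lemma intervalIntegrable_gegenWeight (hα : -1/2 < α)
    (hτ0 : ∀ z ∈ Icc (-1 : ℝ) 1, τ.eval z ≠ 0) :
    IntervalIntegrable (gegenWeight α τ) volume (-1) 1 := by
  have h := intervalIntegrable_one_sub_sq_rpow (s := α - 1/2) (by linarith)
  have hc : ContinuousOn (fun z => ((τ.eval z) ^ 2)⁻¹) (uIcc (-1) 1) := by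
    rw [uIcc_of_le (by norm_num)]
    exact ContinuousOn.inv₀ (by fun_prop) fun z hz => pow_ne_zero 2 (hτ0 z hz)
  exact (h.mul_continuousOn hc).congr fun z _ => (div_eq_mul_inv _ _).symm

lemma intervalIntegrable_rho_integrand (hα : -1/2 < α)
    (hτ0 : ∀ z ∈ Icc (-1 : ℝ) 1, τ.eval z ≠ 0) (pa pb : Polynomial ℝ) :
    IntervalIntegrable (fun u => pa.eval u * pb.eval u * gegenWeight α τ u) volume (-1) 1 :=
  (intervalIntegrable_gegenWeight hα hτ0).continuousOn_mul (by fun_prop)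

lemma continuousOn_gegenWeight (hτ0 : ∀ z ∈ Icc (-1 : ℝ) 1, τ.eval z ≠ 0) :
    ContinuousOn (gegenWeight α τ) (Ioo (-1) 1) := by
  refine ContinuousOn.div (ContinuousOn.rpow_const (by fun_prop) fun z hz => Or.inl ?_)
    (by fun_prop) fun z hz => pow_ne_zero 2 (hτ0 z (Ioo_subset_Icc_self hz))
  nlinarith [hz.1, hz.2]

lemma continuousOn_rhoInt (hα : -1/2 < α)
    (hτ0 : ∀ z ∈ Icc (-1 : ℝ) 1, τ.eval z ≠ 0) (pa pb : Polynomial ℝ) :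
    ContinuousOn (rhoInt α τ pa pb) (Icc (-1) 1) := by
  have h := continuousOn_primitive_interval' (intervalIntegrable_rho_integrand hα hτ0 pa pb)
    left_mem_uIcc
  rwa [uIcc_of_le (by norm_num)] at h

lemma hasDerivAt_rhoInt (hα : -1/2 < α)
    (hτ0 : ∀ z ∈ Icc (-1 : ℝ) 1, τ.eval z ≠ 0) (pa pb : Polynomial ℝ)
    {z : ℝ} (hz : z ∈ Ioo (-1 : ℝ) 1) :
    HasDerivAt (rhoInt α τ pa pb) (pa.eval z * pb.eval z * gegenWeight α τ z) z := by
  have hc : ContinuousOn (fun u => pa.eval u * pb.eval u * gegenWeight α τ u) (Ioo (-1) 1) :=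
    ContinuousOn.mul (by fun_prop) (continuousOn_gegenWeight hτ0)
  refine integral_hasDerivAt_right
    ((intervalIntegrable_rho_integrand hα hτ0 pa pb).mono_set ?_)
    (hc.stronglyMeasurableAtFilter isOpen_Ioo z hz) (hc.continuousAt (isOpen_Ioo.mem_nhds hz))
  rw [uIcc_of_le hz.1.le, uIcc_of_le (by norm_num)]
  exact Icc_subset_Icc_right hz.2.le

lemma gegenWeight_nonneg {z : ℝ} (hz : z ∈ Icc (-1 : ℝ) 1) : 0 ≤ gegenWeight α τ z :=
  div_nonneg (Real.rpow_nonneg (by nlinarith [hz.1, hz.2]) _) (sq_nonneg _)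

lemma rhoInt_self_mem_Icc (hα : -1/2 < α)
    (hτ0 : ∀ z ∈ Icc (-1 : ℝ) 1, τ.eval z ≠ 0) (p : Polynomial ℝ)
    {z : ℝ} (hz : z ∈ Icc (-1 : ℝ) 1) :
    rhoInt α τ p p z ∈ Icc 0 (rhoInt α τ p p 1) := by
  have hnn : ∀ u ∈ Icc (-1 : ℝ) 1, 0 ≤ p.eval u * p.eval u * gegenWeight α τ u := fun u hu =>
    mul_nonneg (mul_self_nonneg _) (gegenWeight_nonneg hu)
  have hint := intervalIntegrable_rho_integrand hα hτ0 p p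
  have hl := hint.mono_set (c := -1) (d := z) (by
    rw [uIcc_of_le hz.1, uIcc_of_le (by norm_num)]; exact Icc_subset_Icc_right hz.2)
  have hr := hint.mono_set (c := z) (d := 1) (by
    rw [uIcc_of_le hz.2, uIcc_of_le (by norm_num)]; exact Icc_subset_Icc_left hz.1)
  refine ⟨integral_nonneg hz.1 fun u hu => hnn u ⟨hu.1, hu.2.trans hz.2⟩, ?_⟩
  have h := integral_nonneg (μ := volume) hz.2 fun u hu => hnn u ⟨hz.1.trans hu.1, hu.2⟩
  have hadd := integral_add_adjacent_intervals hl hr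
  unfold rhoInt
  linarith

lemma one_add_mul_rhoInt_self_pos (hα : -1/2 < α)
    (hτ0 : ∀ z ∈ Icc (-1 : ℝ) 1, τ.eval z ≠ 0) {p : Polynomial ℝ} {t : ℝ}
    (hpos : 0 < 1 + t * rhoInt α τ p p 1) {z : ℝ} (hz : z ∈ Icc (-1 : ℝ) 1) :
    0 < 1 + t * rhoInt α τ p p z := by
  obtain ⟨h0, h1⟩ := rhoInt_self_mem_Icc hα hτ0 p hz
  rcases le_total 0 t with ht | ht
  · positivity
  · linarith [mul_le_mul_of_nonpos_left h1 ht]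

lemma integral_piCDT_sq_mul_gegenWeightCDT (hα : -1/2 < α)
    (hτ0 : ∀ z ∈ Icc (-1 : ℝ) 1, τ.eval z ≠ 0) {t : ℝ} (πi πm : Polynomial ℝ)
    (hpos : 0 < 1 + t * rhoInt α τ πm πm 1) :
    ∫ z in (-1 : ℝ)..1, (piCDT α τ πm πi t z) ^ 2 * gegenWeightCDT α τ πm t z
      = rhoInt α τ πi πi 1
        - t * rhoInt α τ πi πm 1 ^ 2 / (1 + t * rhoInt α τ πm πm 1) := by
  have hR : ∀ z ∈ Icc (-1 : ℝ) 1, 1 + t * rhoInt α τ πm πm z ≠ 0 := fun z hz =>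
    (one_add_mul_rhoInt_self_pos hα hτ0 hpos hz).ne'
  have hii := continuousOn_rhoInt hα hτ0 πi πi
  have him := continuousOn_rhoInt hα hτ0 πi πm
  have hmm := continuousOn_rhoInt hα hτ0 πm πm
  have integrand_eq : ∀ z ∈ Icc (-1 : ℝ) 1,
      (πi.eval z - t * rhoInt α τ πi πm z * πm.eval z / (1 + t * rhoInt α τ πm πm z)) ^ 2
        * gegenWeight α τ z
      = (piCDT α τ πm πi t z) ^ 2 * gegenWeightCDT α τ πm t z := fun z hz => by
    have := hR z hz
    have := hτ0 z hz
    unfold piCDT gegenWeightCDT tauCDT gegenWeight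
    field_simp
  have hint : IntervalIntegrable
      (fun z => (piCDT α τ πm πi t z) ^ 2 * gegenWeightCDT α τ πm t z) volume (-1) 1 := by
    refine ((intervalIntegrable_gegenWeight hα hτ0).continuousOn_mul (g := fun z =>
      (πi.eval z - t * rhoInt α τ πi πm z * πm.eval z / (1 + t * rhoInt α τ πm πm z)) ^ 2)
      ?_).congr fun z hz => ?_
    · rw [uIcc_of_le (by norm_num)]
      fun_prop (disch := assumption)
    · rw [uIoc_of_le (by norm_num)] at hz
      exact integrand_eq z (Ioc_subset_Icc_self hz)
  have hF := integral_eq_sub_of_hasDerivAt_of_le (by norm_num : (-1 : ℝ) ≤ 1)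
    (f := fun z => rhoInt α τ πi πi z
      - t * rhoInt α τ πi πm z ^ 2 / (1 + t * rhoInt α τ πm πm z))
    (by fun_prop (disch := assumption)) (fun z hz => ?_) hint
  · rw [hF]
    simp [rhoInt]
  · have hz' := Ioo_subset_Icc_self hz
    rw [← integrand_eq z hz']
    have hne := hR z hz'
    refine ((hasDerivAt_rhoInt hα hτ0 πi πi hz).sub
      ((((hasDerivAt_rhoInt hα hτ0 πi πm hz).pow 2).const_mul t).div
        (((hasDerivAt_rhoInt hα hτ0 πm πm hz).const_mul t).const_add 1) hne)).congr_deriv ?_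
    simp only [Pi.pow_apply]
    field_simp
    ring

end

/-- the norms after a confluent Darboux transformation. If
`1 + tν_m > 0`, then for `i ≠ m` (with `π_i ⊥ π_m`) the squared norm of `π_{m;i}`
is still `ν_i`, while the squared norm of `π_{m;m}` is `ν_m/(1 + tν_m)`; i.e. the
reciprocal norms satisfy `ν_{m;i}⁻¹ = ν_i⁻¹ + δ_{im}t`. -/
theorem statement15 (α : ℝ) (hα : -1/2 < α) (t : ℝ) (τ πi πm : Polynomial ℝ)
    (hτ0 : ∀ z ∈ Set.Icc (-1 : ℝ) 1, τ.eval z ≠ 0)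
    (hpos : 0 < 1 + t * rhoInt α τ πm πm 1) :
    ((πi ≠ πm →
      (∫ z in (-1 : ℝ)..1, πi.eval z * πm.eval z * gegenWeight α τ z) = 0 →
      ∫ z in (-1 : ℝ)..1, (piCDT α τ πm πi t z) ^ 2 * gegenWeightCDT α τ πm t z
        = rhoInt α τ πi πi 1)) ∧
    (∫ z in (-1 : ℝ)..1, (piCDT α τ πm πm t z) ^ 2 * gegenWeightCDT α τ πm t z
      = rhoInt α τ πm πm 1 / (1 + t * rhoInt α τ πm πm 1)) := by
  rw [integral_piCDT_sq_mul_gegenWeightCDT hα hτ0 πi πm hpos,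
    integral_piCDT_sq_mul_gegenWeightCDT hα hτ0 πm πm hpos]
  refine ⟨fun _ horth => ?_, ?_⟩
  · have h : rhoInt α τ πi πm 1 = 0 := horth
    simp [h]
  · rw [eq_div_iff hpos.ne', sub_mul, div_mul_cancel₀ _ hpos.ne']
    ring
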